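/- Let p be an odd prime. In the polynomial ring 𝔽_p[t][x], write (x² + t·x + 1)^((p−1)/2) = Σ_{n=0}^{p−1} c_n x^n, where each c_n ∈ 𝔽_p[t], and set Φ := Π_{n=0}^{(p−1)/2} c_n ∈ 𝔽_p[t]. Then for every integer i > 1 there exists t₀ ∈ 𝔽_{p^i} with t₀ ≠ 2, t₀ ≠ −2, and Φ(t₀) ≠ 0. -/

import Mathlib

open Polynomial in
theorem aux_mul {R : Type*} [CommRing R] (q r : R[X][X]) (a b : R[X])
    (hq : ∀ n, (q.coeff n).natDegree ≤ n ∧ (q.coeff n).coeff n = a.coeff n)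
    (hr : ∀ n, (r.coeff n).natDegree ≤ n ∧ (r.coeff n).coeff n = b.coeff n) (n : ℕ) :
    ((q * r).coeff n).natDegree ≤ n ∧ ((q * r).coeff n).coeff n = (a * b).coeff n := by
  rw [coeff_mul, coeff_mul, finsetSum_coeff]
  constructor
  · apply natDegree_sum_le_of_forall_le
    intro x hx
    rw [Finset.HasAntidiagonal.mem_antidiagonal] at hx
    exact natDegree_mul_le.trans (by have := (hq x.1).1; have := (hr x.2).1; omega)
  · apply Finset.sum_congr rfl
    intro x hx
    rw [Finset.HasAntidiagonal.mem_antidiagonal] at hx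
    rw [← (hq x.1).2, ← (hr x.2).2, ← hx]
    exact coeff_mul_add_eq_of_natDegree_le (hq x.1).1 (hr x.2).1

open Polynomial in
theorem aux_pow {R : Type*} [CommRing R] [Nontrivial R] (m : ℕ) (n : ℕ) :
    (((X ^ 2 + C (X : R[X]) * X + 1) ^ m).coeff n).natDegree ≤ n ∧
    (((X ^ 2 + C (X : R[X]) * X + 1) ^ m).coeff n).coeff n = ((1 + X : R[X]) ^ m).coeff n := by
  induction m generalizing n with
  | zero =>
    simp only [pow_zero, coeff_one]
    split_ifs with h
    · simp [h]
    · simp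
  | succ m ih =>
    rw [pow_succ, pow_succ]
    apply aux_mul _ _ _ _ ih
    intro n
    rcases n with _ | _ | _ | n
    · simp [coeff_one, coeff_X, coeff_monomial]
    · simp [coeff_one, coeff_X, coeff_monomial]
    · simp [coeff_one, coeff_X, coeff_monomial]
    · simp [coeff_one, coeff_X, coeff_monomial]

open Polynomial in
/-- Let `p` be an odd prime. Writing `(x² + t·x + 1)^((p-1)/2) = Σ cₙ xⁿ` in `𝔽_p[t][x]`
and setting `Φ := Π_{n=0}^{(p-1)/2} cₙ`, for every integer `i > 1` there exists
`t₀ ∈ 𝔽_{p^i}` with `t₀ ≠ ±2` and `Φ(t₀) ≠ 0`. -/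
theorem stmt11 (p : ℕ) [Fact p.Prime] (hodd : Odd p) (i : ℕ) (hi : 1 < i) :
    ∃ t₀ : GaloisField p i, t₀ ≠ 2 ∧ t₀ ≠ -2 ∧
      Polynomial.aeval t₀
        (∏ n ∈ Finset.range ((p - 1) / 2 + 1),
          ((X ^ 2 + C (X : Polynomial (ZMod p)) * X + 1) ^ ((p - 1) / 2)).coeff n) ≠ 0 := by
  have hp : p.Prime := Fact.out
  obtain ⟨m, hm⟩ := hodd
  have hm1 : 1 ≤ m := by have := hp.two_le; omega
  have hm2 : (p - 1) / 2 = m := by omega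
  rw [hm2]
  set Φ : (ZMod p)[X] := ∏ n ∈ Finset.range (m + 1),
          ((X ^ 2 + C (X : Polynomial (ZMod p)) * X + 1) ^ m).coeff n with hΦ
  have hdeg : Φ.natDegree ≤ m * (m + 1) := by
    refine (natDegree_prod_le _ _).trans ?_
    calc _ ≤ ∑ n ∈ Finset.range (m + 1), n :=
          Finset.sum_le_sum fun n _ => (aux_pow m n).1
      _ ≤ ∑ n ∈ Finset.range (m + 1), m :=
          Finset.sum_le_sum fun n hn => by rw [Finset.mem_range] at hn; omega
      _ = _ := by simp [mul_comm]
  have h0 : Φ ≠ 0 := by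
    rw [hΦ, Finset.prod_ne_zero_iff]
    intro n hn h
    rw [Finset.mem_range] at hn
    have h2 := (aux_pow (R := ZMod p) m n).2
    rw [h, coeff_zero, coeff_one_add_X_pow, eq_comm, CharP.cast_eq_zero_iff (ZMod p) p] at h2
    have h3 : p ∣ m.factorial := h2.trans (Nat.choose_mul_factorial_mul_factorial
      (show n ≤ m by omega) ▸ Dvd.intro _ (by rw [← mul_assoc]))
    rw [hp.dvd_factorial] at h3
    omega
  let Ψ : (GaloisField p i)[X] :=
    (Φ.map (algebraMap (ZMod p) (GaloisField p i))) * ((X - C 2) * (X - C (-2)))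
  have hΨ : Ψ ≠ 0 := mul_ne_zero ((Polynomial.map_ne_zero_iff
    (algebraMap (ZMod p) (GaloisField p i)).injective).2 h0)
    (mul_ne_zero (X_sub_C_ne_zero _) (X_sub_C_ne_zero _))
  have hΨd : Ψ.natDegree < Nat.card (GaloisField p i) := by
    rw [GaloisField.card p i (by omega)]
    have h1 : Ψ.natDegree ≤ m * (m + 1) + (1 + 1) := by
      refine natDegree_mul_le.trans (add_le_add (natDegree_map_le.trans hdeg) ?_)
      refine natDegree_mul_le.trans ?_
      rw [natDegree_X_sub_C, natDegree_X_sub_C]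
    have h2 : p ^ 2 ≤ p ^ i := Nat.pow_le_pow_right hp.pos hi
    have h3 : m * (m + 1) + (1 + 1) < p ^ 2 := by subst hm; nlinarith
    omega
  have := Fintype.ofFinite (GaloisField p i)
  by_contra! hcon
  apply hΨ
  apply Polynomial.eq_zero_of_natDegree_lt_card_of_eval_eq_zero Ψ
    (f := (id : GaloisField p i → GaloisField p i)) Function.injective_id
  · intro t
    by_cases ha : t = 2
    · simp [Ψ, ha]
    by_cases hb : t = -2
    · simp [Ψ, hb]
    have := hcon t ha hb
    simp only [Ψ, id, eval_mul, eval_map_algebraMap, this, zero_mul]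
  · rwa [← Nat.card_eq_fintype_card]
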